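/- For every β ∈ [1,2), G(β) ≤ −log₂(1.236). (Consequently q(n) ≥ 1.236^{n−o(n)} for every n ∈ ℕ.) -/

import Mathlib

/-- The binary entropy function, `h(p) = p log₂(1/p) + (1-p) log₂(1/(1-p))`,
with the convention `h(0) = h(1) = 0` (automatic since `1/0 = 0` and `logb 2 0 = 0`). -/
noncomputable def binH (p : ℝ) : ℝ :=
  p * Real.logb 2 (1 / p) + (1 - p) * Real.logb 2 (1 / (1 - p))

/-- `(c, b) ∈ C(β)`: `c : ℕ → [0,1]`, `∑ cᵢ/2ⁱ = 1/(β·2ᵇ)` and `∑ cᵢ ≤ 1`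
(the latter expressed via partial sums, which is equivalent for nonnegative terms). -/
def memC (β : ℝ) (c : ℕ → ℝ) (b : ℕ) : Prop :=
  (∀ i, c i ∈ Set.Icc (0 : ℝ) 1) ∧
  (∑' i : ℕ, c i / 2 ^ i) = 1 / (β * 2 ^ b) ∧
  ∀ n : ℕ, (∑ i ∈ Finset.range n, c i) ≤ 1

/-- `α ∈ A(c,b)`: `α : ℕ → [0,1]` with `∑ αᵢ cᵢ / 2ⁱ = 1/(β·2^{b+1})`. -/
def memA (β : ℝ) (b : ℕ) (c α : ℕ → ℝ) : Prop :=
  (∀ i, α i ∈ Set.Icc (0 : ℝ) 1) ∧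
  (∑' i : ℕ, α i * c i / 2 ^ i) = 1 / (β * 2 ^ (b + 1))

/-- `P(c,α) = ∑ h(αᵢ)·cᵢ − h(∑ αᵢ·cᵢ)`. -/
noncomputable def Pfun (c α : ℕ → ℝ) : ℝ :=
  (∑' i : ℕ, binH (α i) * c i) - binH (∑' i : ℕ, α i * c i)

/-- `sup_{α ∈ A(c,b)} P(c,α)`. -/
noncomputable def supP (β : ℝ) (b : ℕ) (c : ℕ → ℝ) : ℝ :=
  sSup {y | ∃ α, memA β b c α ∧ y = Pfun c α}

/-- `G(β) = inf_{(c,b) ∈ C(β)} sup_{α ∈ A(c,b)} P(c,α)`. -/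
noncomputable def Gfun (β : ℝ) : ℝ :=
  sInf {y | ∃ c b, memC β c b ∧ y = supP β b c}

theorem binH_eq_binEntropy_div (p : ℝ) : binH p = Real.binEntropy p / Real.log 2 := by
  simp only [binH, Real.binEntropy, Real.logb, one_div]
  ring

theorem binH_nonneg {p : ℝ} (hp : p ∈ Set.Icc (0 : ℝ) 1) : 0 ≤ binH p := by
  rw [binH_eq_binEntropy_div]
  exact div_nonneg (Real.binEntropy_nonneg hp.1 hp.2) (Real.log_nonneg (by norm_num))

theorem binH_le_one (p : ℝ) : binH p ≤ 1 := by
  rw [binH_eq_binEntropy_div, div_le_one (Real.log_pos (by norm_num))]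
  exact Real.binEntropy_le_log_two

theorem memA_half {β : ℝ} {b : ℕ} {c : ℕ → ℝ} (h : memC β c b) :
    memA β b c fun _ => 1 / 2 := by
  refine ⟨fun _ => by norm_num, ?_⟩
  simp only [mul_div_assoc]
  rw [tsum_mul_left, h.2.1, pow_succ]
  ring

theorem neg_one_le_supP {β : ℝ} {b : ℕ} {c : ℕ → ℝ} (h : memC β c b) : -1 ≤ supP β b c := by
  by_cases hb : BddAbove {y | ∃ α, memA β b c α ∧ y = Pfun c α}
  · refine le_trans ?_ (le_csSup hb ⟨_, memA_half h, rfl⟩)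
    have h1 : 0 ≤ ∑' i : ℕ, binH (1 / 2) * c i :=
      tsum_nonneg fun i => mul_nonneg (binH_nonneg (by norm_num)) (h.1 i).1
    have h2 := binH_le_one (∑' i : ℕ, 1 / 2 * c i)
    unfold Pfun
    linarith
  · rw [supP, Real.sSup_of_not_bddAbove hb]
    norm_num

theorem Gfun_le_of_forall_Pfun_le {β M : ℝ} {b : ℕ} {c : ℕ → ℝ} (h : memC β c b)
    (hM : ∀ α, memA β b c α → Pfun c α ≤ M) : Gfun β ≤ M := by
  have hbdd : BddBelow {y | ∃ c b, memC β c b ∧ y = supP β b c} := by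
    refine ⟨-1, ?_⟩
    rintro _ ⟨c, b, hc, rfl⟩
    exact neg_one_le_supP hc
  refine (csInf_le hbdd ⟨c, b, h, rfl⟩).trans (csSup_le ⟨_, _, memA_half h, rfl⟩ ?_)
  rintro _ ⟨α, hα, rfl⟩
  exact hM α hα

/-- The sequence `(y, x, 0, 0, …)`. -/
def twoLevel (y x : ℝ) : ℕ → ℝ
  | 0 => y
  | 1 => x
  | _ => 0

theorem tsum_eq_of_twoLevel {y x : ℝ} {f : ℕ → ℝ} (hf : ∀ i, twoLevel y x i = 0 → f i = 0) :
    ∑' i, f i = f 0 + f 1 := by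
  rw [tsum_eq_sum (s := Finset.range 2), Finset.sum_range_succ, Finset.sum_range_one]
  intro i hi
  rcases i with _ | _ | i
  · simp at hi
  · simp at hi
  · exact hf _ rfl

theorem memC_twoLevel {β y x : ℝ} {b : ℕ} (hy : 0 ≤ y) (hx : 0 ≤ x) (hxy : y + x ≤ 1)
    (h : y + x / 2 = 1 / (β * 2 ^ b)) : memC β (twoLevel y x) b := by
  refine ⟨?_, ?_, ?_⟩
  · rintro (_ | _ | i)
    · exact ⟨hy, by simp only [twoLevel]; linarith⟩
    · exact ⟨hx, by simp only [twoLevel]; linarith⟩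
    · simp [twoLevel]
  · rw [tsum_eq_of_twoLevel (y := y) (x := x) (fun i hi => by simp [hi]), ← h]
    simp [twoLevel]
  · rintro (_ | _ | n)
    · simp
    · simp only [zero_add, Finset.sum_range_one, twoLevel]
      linarith
    · rw [Finset.sum_range_succ', Finset.sum_range_succ']
      simp only [twoLevel, Finset.sum_const_zero]
      linarith

theorem Pfun_twoLevel (y x : ℝ) (α : ℕ → ℝ) :
    Pfun (twoLevel y x) α =
      binH (α 0) * y + binH (α 1) * x - binH (α 0 * y + α 1 * x) := by
  rw [Pfun, tsum_eq_of_twoLevel (y := y) (x := x) (fun i hi => by simp [hi]),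
    tsum_eq_of_twoLevel (y := y) (x := x) (fun i hi => by simp [hi])]
  rfl

theorem memA.twoLevel_eq {β y x : ℝ} {b : ℕ} {α : ℕ → ℝ} (h : memA β b (twoLevel y x) α) :
    α 0 * y + α 1 * x / 2 = 1 / (β * 2 ^ (b + 1)) := by
  rw [← h.2, tsum_eq_of_twoLevel (y := y) (x := x) (fun i hi => by simp [hi])]
  simp [twoLevel]

/-- Tangent-line bound for `(a, S) ↦ w * a * log (S / a)`, with slope parameter `k = a / S`
at the point of tangency. -/
theorem mul_negMulLog_add_le {w a S k : ℝ} (hw : 0 ≤ w) (ha : 0 ≤ a) (hk : 0 < k)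
    (hS : w * a ≤ S) :
    w * Real.negMulLog a + w * a * Real.log S ≤ -(w * a) * Real.log k + S * w * k - w * a := by
  rcases (mul_nonneg hw ha).eq_or_lt with h0 | h0
  · have hS0 : 0 ≤ S * w * k := by
      rw [← h0] at hS
      positivity
    have h1 : w * Real.negMulLog a = 0 := by
      rw [Real.negMulLog]
      linear_combination Real.log a * h0
    rw [h1, ← h0]
    linarith
  · have ha' : 0 < a := ha.lt_of_ne' (right_ne_zero_of_mul h0.ne')
    have hS' : 0 < S := h0.trans_le hS
    have h1 := Real.log_le_sub_one_of_pos (show 0 < S * k / a by positivity)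
    rw [Real.log_div (by positivity) ha'.ne', Real.log_mul hS'.ne' hk.ne'] at h1
    have h2 := mul_le_mul_of_nonneg_left h1 h0.le
    have h3 : w * a * (S * k / a - 1) = S * w * k - w * a := by
      field_simp
    rw [h3] at h2
    rw [Real.negMulLog]
    linarith

open Real in
theorem binEntropy_mixture_le {x y a₀ a₁ : ℝ} (hx : 0 ≤ x) (hy : 0 ≤ y) (hxy : y + x ≤ 1)
    (h₀ : a₀ ∈ Set.Icc (0 : ℝ) 1) (h₁ : a₁ ∈ Set.Icc (0 : ℝ) 1)
    (hφ : x + goldenRatio * y = 1 / 2) (ha : 2 * (a₀ * y) + a₁ * x = (2 * y + x) / 2) :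
    binEntropy a₀ * y + binEntropy a₁ * x - binEntropy (a₀ * y + a₁ * x) ≤
      log goldenRatio - log 2 := by
  obtain ⟨h₀, h₀'⟩ := h₀
  obtain ⟨h₁, h₁'⟩ := h₁
  have hφ0 := goldenRatio_pos
  have hu := mul_nonneg hy h₀
  have hv := mul_nonneg hx h₁
  have hu' := mul_nonneg hy (sub_nonneg.2 h₀')
  have hv' := mul_nonneg hx (sub_nonneg.2 h₁')
  set S := a₀ * y + a₁ * x with hS
  have e1 := mul_negMulLog_add_le (S := S) hy h₀ (show 0 < 2 * goldenRatio by positivity)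
    (by linarith)
  have e2 := mul_negMulLog_add_le (S := S) hx h₁ (show (0 : ℝ) < 2 by norm_num) (by linarith)
  have e3 := mul_negMulLog_add_le (S := 1 - S) hy (sub_nonneg.2 h₀')
    (show 0 < 2 * goldenRatio⁻¹ ^ 3 by positivity) (by linarith)
  have e4 := mul_negMulLog_add_le (S := 1 - S) hx (sub_nonneg.2 h₁')
    (show 0 < 2 * goldenRatio⁻¹ ^ 2 by positivity) (by linarith)
  have e5 := mul_negMulLog_add_le (w := 1 - x - y) (S := 1 - S) (by linarith) zero_le_one
    (show 0 < 2 * goldenRatio⁻¹ by positivity) (by linarith)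
  rw [log_mul two_ne_zero (by positivity)] at e1 e3 e4 e5
  rw [log_pow, log_inv] at e3 e4
  rw [log_inv] at e5
  rw [negMulLog_one] at e5
  simp only [binEntropy_eq_negMulLog_add_negMulLog_one_sub]
  have hinv : goldenRatio⁻¹ = goldenRatio - 1 := by
    rw [inv_goldenRatio]
    linarith [goldenRatio_add_goldenConj]
  have hsq := goldenRatio_sq
  have h2 : goldenRatio⁻¹ ^ 2 = 2 - goldenRatio := by
    rw [hinv]; linear_combination hsq
  have h3 : goldenRatio⁻¹ ^ 3 = 2 * goldenRatio - 3 := by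
    rw [pow_succ, h2, hinv]; linear_combination -hsq
  rw [h3] at e3
  rw [h2] at e4
  rw [hinv] at e5
  push_cast at e3 e4
  have hsum := add_le_add (add_le_add (add_le_add (add_le_add e1 e2) e3) e4) e5
  have hSS : negMulLog S + negMulLog (1 - S) = -(S * log S) - (1 - S) * log (1 - S) := by
    simp only [negMulLog]; ring
  rw [hSS]
  refine le_of_sub_nonneg ((sub_nonneg.2 hsum).trans_eq ?_)
  generalize log S = ls at *
  generalize log (1 - S) = lt at *
  clear_value S
  subst hS
  linear_combination 2 * (a₀ * y + a₁ * x) * hφ +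
    (1 - (a₀ * y + a₁ * x)) * ((6 - 4 * goldenRatio) * hφ + 4 * y * hsq) -
    2 * log goldenRatio * ha

open Real in
theorem mul_log_two_sub_binEntropy_half_le {s : ℝ} (hs : s ∈ Set.Icc (3 / 10 : ℝ) (1 / 2)) :
    s * log 2 - binEntropy (s / 2) ≤ -log 1.236 := by
  obtain ⟨hs1, hs2⟩ := hs
  have hconc := strictConcave_binEntropy.concaveOn.2 (x := 3 / 20) (y := 1 / 4)
    (by norm_num) (by norm_num) (show 0 ≤ 5 * (1 / 2 - s) by linarith)
    (show 0 ≤ 5 * (s - 3 / 10) by linarith) (by ring)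
  simp only [smul_eq_mul] at hconc
  rw [show 5 * (1 / 2 - s) * (3 / 20) + 5 * (s - 3 / 10) * (1 / 4) = s / 2 by ring] at hconc
  have e1 : 3 / 10 * log 2 - binEntropy (3 / 20) ≤ -log 1.236 := by
    have h := log_le_log (by norm_num)
      (show (2 : ℝ) ^ 6 * 3 ^ 3 * 17 ^ 17 * 1.236 ^ 20 ≤ 20 ^ 20 by norm_num)
    rw [log_mul (by norm_num) (by norm_num), log_mul (by norm_num) (by norm_num),
      log_mul (by norm_num) (by norm_num)] at h
    simp only [log_pow] at h
    rw [binEntropy, show (1 - 3 / 20 : ℝ) = 17 / 20 by norm_num, log_inv, log_inv,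
      log_div (by norm_num) (by norm_num), log_div (by norm_num) (by norm_num)]
    push_cast at h
    linarith
  have e2 : 1 / 2 * log 2 - binEntropy (1 / 4) ≤ -log 1.236 := by
    have h := log_le_log (by norm_num)
      (show (2 : ℝ) ^ 2 * 3 ^ 3 * 1.236 ^ 4 ≤ 4 ^ 4 by norm_num)
    rw [log_mul (by norm_num) (by norm_num), log_mul (by norm_num) (by norm_num)] at h
    simp only [log_pow] at h
    rw [binEntropy, show (1 - 1 / 4 : ℝ) = 3 / 4 by norm_num, log_inv, log_inv,
      log_div (by norm_num) (by norm_num), log_div (by norm_num) (by norm_num), log_one]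
    push_cast at h
    linarith
  have m1 := mul_le_mul_of_nonneg_left e1 (show 0 ≤ 5 * (1 / 2 - s) by linarith)
  have m2 := mul_le_mul_of_nonneg_left e2 (show 0 ≤ 5 * (s - 3 / 10) by linarith)
  linarith

/-- `G(β) ≤ −log₂(1.236)` for every `β ∈ [1,2)`. -/
theorem G_le_neg_log_1236 (β : ℝ) (hβ : β ∈ Set.Ico (1 : ℝ) 2) :
    Gfun β ≤ -(Real.logb 2 1.236) := by
  obtain ⟨h1, h2⟩ := hβ
  have hφ1 := Real.one_lt_goldenRatio
  have hsq := Real.goldenRatio_sq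
  have hlog2 : 0 < Real.log 2 := Real.log_pos (by norm_num)
  have hβ0 : β ≠ 0 := by positivity
  have hφ5 : Real.goldenRatio ≤ 1.6181 := by nlinarith
  have hφ6 : 1.6 ≤ Real.goldenRatio := by nlinarith
  have hβ1 : β⁻¹ ≤ 1 := inv_le_one_of_one_le₀ h1
  have hβ2 : 1 / 2 ≤ β⁻¹ := by
    rw [one_div]
    exact inv_anti₀ (by linarith) h2.le
  rw [Real.logb, ← neg_div]
  rcases le_total β Real.goldenRatio with h | h
  · have hs : 3 / 5 ≤ β⁻¹ := by
      refine le_trans ?_ (inv_anti₀ (by linarith) h)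
      rw [le_inv_comm₀ (by norm_num) (by linarith)]
      norm_num at hφ5 ⊢
      linarith
    have key := mul_log_two_sub_binEntropy_half_le (s := β⁻¹ / 2) ⟨by linarith, by linarith⟩
    refine Gfun_le_of_forall_Pfun_le (b := 1) (memC_twoLevel (y := β⁻¹ / 2) (x := 0)
      (by linarith) le_rfl (by linarith) (by field_simp; norm_num)) fun α hα => ?_
    have hα0 : α 0 = 1 / 2 := by
      have h3 := hα.twoLevel_eq
      field_simp at h3
      norm_num at h3
      linarith
    rw [Pfun_twoLevel, hα0, le_div_iff₀ hlog2]
    simp only [binH_eq_binEntropy_div, mul_zero, add_zero]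
    rw [show (1 / 2 : ℝ) = 2⁻¹ by norm_num, Real.binEntropy_two_inv]
    refine le_trans (le_of_eq ?_) key
    field_simp
  · have hφinv : β⁻¹ ≤ Real.goldenRatio - 1 := by
      refine (inv_anti₀ (by linarith) h).trans_eq ?_
      rw [Real.inv_goldenRatio]
      linarith [Real.goldenRatio_add_goldenConj]
    set t := β⁻¹ with ht
    set y := (t - 1 / 2) * (Real.goldenRatio + 1) with hy
    have hy0 : 0 ≤ y := mul_nonneg (by linarith) (by linarith)
    have hφy : t - 2 * y + Real.goldenRatio * y = 1 / 2 := by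
      rw [hy]
      linear_combination (t - 1 / 2) * hsq
    have hx0 : 0 ≤ t - 2 * y := by
      have h3 := mul_le_mul_of_nonneg_right (sub_le_sub_right hφinv (1 / 2))
        (show 0 ≤ Real.goldenRatio + 1 by linarith)
      rw [← hy] at h3
      nlinarith
    have hmem : memC β (twoLevel y (t - 2 * y)) 1 :=
      memC_twoLevel hy0 hx0 (by linarith) (by rw [ht]; field_simp; ring)
    refine Gfun_le_of_forall_Pfun_le hmem fun α hα => ?_
    have h3 := hα.twoLevel_eq
    have h4 : 1 / (β * 2 ^ (1 + 1)) = t / 4 := by rw [ht]; field_simp; norm_num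
    rw [h4] at h3
    have key := binEntropy_mixture_le hx0 hy0 (by linarith) (hα.1 0) (hα.1 1) hφy (by linarith)
    rw [Pfun_twoLevel, le_div_iff₀ hlog2]
    simp only [binH_eq_binEntropy_div]
    refine (le_of_eq ?_).trans (key.trans ?_)
    · field_simp
    · rw [← Real.log_div (by positivity) two_ne_zero, ← Real.log_inv]
      refine Real.log_le_log (by positivity) ?_
      norm_num at hφ5 ⊢
      linarith
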